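/- Fix an integer k ≥ 0 and an integer N > k. Let Ẑ be an F_k-measurable 𝔹-valued random variable and let δ₂ ∈ (0,1) and r₂ ≥ 0 be such that P(‖μ − Ẑ‖ ≥ r₂) ≤ δ₂. Fix δ₁ ∈ (0,1) with δ₁ + δ₂ ≤ 1 and set λ := ( β·log(2/δ₁) / ( (N−k)·(β·𝔠_p + K_p·2^{p−1})·(v + r₂^p) ) )^{1/p} and μ̂_N(k) := (1/(N−k))·Σ_{m=k+1}^N ( Trunc(λ(X_m − Ẑ))·(X_m − Ẑ) + Ẑ ). Then with probability at least 1 − δ₁ − δ₂: ‖μ̂_N(k) − μ‖ ≤ 2·( (β·𝔠_p + K_p·2^{p−1})·(v + r₂^p) )^{1/p}·( β·log(2/δ₁)/(N−k) )^{(p−1)/p}. -/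

import Mathlib

open MeasureTheory
open scoped Classical

/-- `truncB x = min(1, ‖x‖)/‖x‖` for `x ≠ 0`, and `truncB 0 = 1`; so `truncB x • x` is the
projection of `x` onto the closed unit ball. -/
noncomputable def truncB {B : Type*} [NormedAddCommGroup B] (x : B) : ℝ :=
  if x = 0 then 1 else min 1 ‖x‖ / ‖x‖

/-- `K_p = (1/p) ((p-1)/p)^{p-1}`. -/
noncomputable def Kp (p : ℝ) : ℝ := (1 / p) * ((p - 1) / p) ^ (p - 1)

/-- `𝔠_p(ρ) = 2^{p+1} (e^{2ρ} - 2ρ - 1)/(2ρ)²`. -/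
noncomputable def frakC (p ρ : ℝ) : ℝ :=
  2 ^ (p + 1) * (Real.exp (2 * ρ) - 2 * ρ - 1) / (2 * ρ) ^ 2

/-!
A `(2, β)`-smooth norm has a Lipschitz gradient for `‖·‖ ^ 2`, found by dyadic iteration of the
smoothness inequality from any supporting functional. Since `s ↦ cosh √s` is convex, it lies below
its chords, and this turns the quadratic estimate into Pinelis' inequality
`cosh ‖x + w‖ ≤ cosh ‖x‖ + ⟨g x, w⟩ + β ^ 2 * cosh ‖x‖ * (exp ‖w‖ - ‖w‖ - 1)`, in which the linear
term disappears on averaging over a martingale increment `w`. Hence `cosh ‖S_n‖` grows at most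
geometrically in expectation, and Markov's inequality gives a deviation bound for `S_n`.

Truncated samples are bounded, so their conditional fluctuations fit this bound, with a second
moment at most the conditional `p`-th moment of the raw samples; by Bernoulli's inequality the bias
of truncation is at most `K_p` times the same moment. The given `lam` balances `β log (2 / δ₁)`
against the sum of these moment terms.
-/

section TwoSmooth

variable {B : Type*} [NormedAddCommGroup B] {β : ℝ}

variable (B) in
/-- The norm of `B` is `(2, β)`-smooth: up to the constant `β`, it satisfies one half of the
parallelogram identity. -/
def IsTwoSmooth (β : ℝ) : Prop :=
  ∀ x y : B, ‖x + y‖ ^ 2 + ‖x - y‖ ^ 2 ≤ 2 * ‖x‖ ^ 2 + 2 * β ^ 2 * ‖y‖ ^ 2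

theorem IsTwoSmooth.one_le_sq (h : IsTwoSmooth B β) {w : B} (hw : w ≠ 0) : 1 ≤ β ^ 2 := by
  have hpos : 0 < ‖w‖ ^ 2 := by positivity
  have hpar := h 0 w
  simp only [zero_add, zero_sub, norm_neg, norm_zero] at hpar
  nlinarith

variable [NormedSpace ℝ B]

/-- A selection of the subdifferential of `‖·‖ ^ 2`: twice a norming functional of `x`, scaled by
`‖x‖`. When the norm is `(2, β)`-smooth it is the gradient of `‖·‖ ^ 2`. -/
noncomputable def sqNormGrad (x : B) : StrongDual ℝ B :=
  (2 * ‖x‖) • (exists_dual_vector'' ℝ x).choose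

theorem norm_sqNormGrad_le (x : B) : ‖sqNormGrad x‖ ≤ 2 * ‖x‖ := by
  rw [sqNormGrad, norm_smul, Real.norm_of_nonneg (by positivity)]
  exact mul_le_of_le_one_right (by positivity) (exists_dual_vector'' ℝ x).choose_spec.1

theorem norm_sq_add_sqNormGrad_le (x w : B) :
    ‖x‖ ^ 2 + sqNormGrad x w ≤ ‖x + w‖ ^ 2 := by
  obtain ⟨hj, hjx⟩ := (exists_dual_vector'' ℝ x).choose_spec
  set j := (exists_dual_vector'' ℝ x).choose
  have hsq : (j x + j w) ^ 2 ≤ ‖x + w‖ ^ 2 := by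
    rw [← map_add]
    exact sq_le_sq.2 (by simpa using j.le_of_opNorm_le hj (x + w))
  rw [show j x = ‖x‖ from hjx] at hsq
  have hgrad : sqNormGrad x w = 2 * ‖x‖ * j w := rfl
  nlinarith [sq_nonneg (j w)]

namespace IsTwoSmooth

/- Smoothness at `x + w / 2` bounds the defect at `w` by twice the defect at `w / 2` plus
`β ^ 2 * ‖w‖ ^ 2 / 2`, so the excess over `β ^ 2 * ‖w‖ ^ 2` halves at each dyadic step. -/
theorem norm_add_sq_le (h : IsTwoSmooth B β) (x w : B) :
    ‖x + w‖ ^ 2 ≤ ‖x‖ ^ 2 + sqNormGrad x w + β ^ 2 * ‖w‖ ^ 2 := by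
  have hdyadic (n : ℕ) : ∀ w : B,
      ‖x + w‖ ^ 2 ≤ ‖x‖ ^ 2 + sqNormGrad x w + β ^ 2 * (1 + (1 / 2) ^ n) * ‖w‖ ^ 2 := by
    induction n with
    | zero =>
      intro w
      have hlower := norm_sq_add_sqNormGrad_le x (-w)
      rw [map_neg, ← sub_eq_add_neg x] at hlower
      rw [pow_zero]
      linarith [h x w]
    | succ n ih =>
      intro w
      obtain ⟨u, rfl⟩ : ∃ u : B, w = u + u := ⟨(1 / 2 : ℝ) • w, by module⟩
      have hsmooth := h (x + u) u
      rw [add_sub_cancel_right, add_assoc] at hsmooth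
      rw [show ‖u + u‖ = 2 * ‖u‖ by rw [← two_smul ℝ u, norm_smul, Real.norm_two], map_add,
        pow_succ (1 / 2 : ℝ)]
      linarith [ih u]
  have hlim : Filter.Tendsto
      (fun n : ℕ ↦ ‖x‖ ^ 2 + sqNormGrad x w + β ^ 2 * (1 + (1 / 2) ^ n) * ‖w‖ ^ 2)
      Filter.atTop (nhds (‖x‖ ^ 2 + sqNormGrad x w + β ^ 2 * (1 + 0) * ‖w‖ ^ 2)) :=
    ((((tendsto_pow_atTop_nhds_zero_of_lt_one (by norm_num) (by norm_num)).const_add _).const_mul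
      _).mul_const _).const_add _
  simpa using ge_of_tendsto' hlim fun n ↦ hdyadic n w

theorem sqNormGrad_sub_apply_le (h : IsTwoSmooth B β) (x y w : B) :
    (sqNormGrad x - sqNormGrad y) w ≤ β ^ 2 * ‖w‖ ^ 2 + 2 * β ^ 2 * ‖x - y‖ ^ 2 := by
  have hyw := h.norm_add_sq_le y w
  have hyx := h.norm_add_sq_le y (x - y)
  have hxy := h.norm_add_sq_le x (y - x)
  have hyx' := norm_sq_add_sqNormGrad_le y (x - y)
  have hxw := norm_sq_add_sqNormGrad_le x (y + w - x)
  rw [add_sub_cancel] at hyx hxy hyx' hxw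
  rw [norm_sub_rev y x] at hxy
  simp only [map_sub, map_add, _root_.sub_apply] at *
  linarith

theorem lipschitzWith_sqNormGrad (h : IsTwoSmooth B β) :
    LipschitzWith (3 * β ^ 2).toNNReal (sqNormGrad : B → StrongDual ℝ B) := by
  refine LipschitzWith.of_dist_le_mul fun x y ↦ ?_
  rw [dist_eq_norm, dist_eq_norm, Real.coe_toNNReal _ (by positivity)]
  rcases eq_or_ne x y with rfl | hxy
  · simp
  have hpos : 0 < ‖x - y‖ := norm_sub_pos_iff.2 hxy
  have hunit {e : B} (he : ‖e‖ = 1) :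
      (sqNormGrad x - sqNormGrad y) e ≤ 3 * β ^ 2 * ‖x - y‖ := by
    have hscaled := h.sqNormGrad_sub_apply_le x y (‖x - y‖ • e)
    rw [map_smul, smul_eq_mul, norm_smul, norm_norm, he, mul_one] at hscaled
    exact le_of_mul_le_mul_left (by linarith) hpos
  refine ContinuousLinearMap.opNorm_le_of_unit_norm (by positivity) fun e he ↦
    abs_le.2 ⟨?_, hunit he⟩
  have hneg := hunit ((norm_neg e).trans he)
  rw [map_neg] at hneg
  linarith

end IsTwoSmooth

end TwoSmooth

section Hyperbolic

open Set

theorem convexOn_cosh_sqrt : ConvexOn ℝ (Ici 0) fun s ↦ Real.cosh √s := by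
  refine ⟨convex_Ici 0, fun s hs t ht a b ha hb hab ↦ ?_⟩
  have hseries {s : ℝ} (hs : 0 ≤ s) :
      HasSum (fun n : ℕ ↦ s ^ n / ((2 * n).factorial : ℝ)) (Real.cosh √s) := by
    simpa only [pow_mul, Real.sq_sqrt hs] using Real.hasSum_cosh √s
  refine hasSum_le (fun n ↦ ?_) (hseries (convex_Ici 0 hs ht ha hb hab))
    (((hseries hs).const_smul a).add ((hseries ht).const_smul b))
  have hpow := (convexOn_pow n).2 hs ht ha hb hab
  simp only [smul_eq_mul] at hpow ⊢
  rw [mul_div_assoc', mul_div_assoc', ← add_div]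
  gcongr

/- On the interval `[(u - a) ^ 2, (u + a) ^ 2]` the convex function `s ↦ cosh √s` lies below its
chord, and the chord is the right-hand side by the addition formulas. -/
theorem exists_cosh_le_of_abs_sub_le {u a r : ℝ} (hu : 0 ≤ u) (ha : 0 ≤ a) (hlow : |u - a| ≤ r)
    (hup : r ≤ u + a) : ∃ τ ≤ 1, r ^ 2 = u ^ 2 + a ^ 2 + 2 * u * a * τ ∧
      Real.cosh r ≤ Real.cosh u * Real.cosh a + τ * (Real.sinh u * Real.sinh a) := by
  have hr : 0 ≤ r := (abs_nonneg _).trans hlow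
  rcases hu.eq_or_lt with rfl | hu
  · obtain rfl : r = a :=
      le_antisymm (by simpa using hup) (by simpa [abs_of_nonneg ha] using hlow)
    exact ⟨0, zero_le_one, by ring, by simp⟩
  rcases ha.eq_or_lt with rfl | ha
  · obtain rfl : r = u :=
      le_antisymm (by simpa using hup) (by simpa [abs_of_pos hu] using hlow)
    exact ⟨0, zero_le_one, by ring, by simp⟩
  have hsqlow : (u - a) ^ 2 ≤ r ^ 2 := sq_le_sq.2 (hlow.trans (le_abs_self r))
  have hsqup : r ^ 2 ≤ (u + a) ^ 2 := pow_le_pow_left₀ hr hup 2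
  set τ := (r ^ 2 - u ^ 2 - a ^ 2) / (2 * u * a) with hτ
  have hrτ : r ^ 2 = u ^ 2 + a ^ 2 + 2 * u * a * τ := by rw [hτ]; field_simp; ring
  have hτ1 : τ ≤ 1 := by rw [hτ, div_le_one (by positivity)]; linarith
  have hτ2 : -1 ≤ τ := by rw [hτ, le_div_iff₀ (by positivity)]; linarith
  refine ⟨τ, hτ1, hrτ, ?_⟩
  have hchord := convexOn_cosh_sqrt.2 (sq_nonneg (u - a)) (sq_nonneg (u + a))
    (show 0 ≤ (1 - τ) / 2 by linarith) (show 0 ≤ (1 + τ) / 2 by linarith) (by ring)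
  simp only [smul_eq_mul] at hchord
  rw [show (1 - τ) / 2 * (u - a) ^ 2 + (1 + τ) / 2 * (u + a) ^ 2 = r ^ 2 by rw [hrτ]; ring]
    at hchord
  simp only [Real.sqrt_sq_eq_abs, Real.cosh_abs, Real.cosh_add, Real.cosh_sub] at hchord
  linarith

theorem sinh_le_self_mul_cosh {u : ℝ} (hu : 0 ≤ u) : Real.sinh u ≤ u * Real.cosh u := by
  refine hasSum_le (fun n ↦ ?_) (Real.hasSum_sinh u) ((Real.hasSum_cosh u).mul_left u)
  rw [mul_div_assoc', ← pow_succ']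
  gcongr
  omega

theorem sinh_div_two_mul_le {u : ℝ} (hu : 0 ≤ u) :
    Real.sinh u / (2 * u) ≤ Real.cosh u / 2 := by
  rcases hu.eq_or_lt with rfl | hu0
  · simp
  · rw [div_le_iff₀ (by positivity)]
    linarith [sinh_le_self_mul_cosh hu]

/- Split `sinh a = a + (sinh a - a)`: the linear part is controlled by `ℓ`, up to a quadratic term
absorbed in `exp a - a - 1`, and the excess is at most `cosh u * (sinh a - a)`. -/
theorem cosh_mul_cosh_add_le {u a τ γ ℓ : ℝ} (hu : 0 ≤ u) (ha : 0 ≤ a) (hτ : τ ≤ 1)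
    (hγ : 1 ≤ γ) (hℓ : 2 * u * a * τ ≤ ℓ + (γ - 1) * a ^ 2) :
    Real.cosh u * Real.cosh a + τ * (Real.sinh u * Real.sinh a) ≤
      Real.cosh u + Real.sinh u / (2 * u) * ℓ +
        γ * (Real.cosh u * (Real.exp a - a - 1)) := by
  have hsinh : 0 ≤ Real.sinh u := Real.sinh_nonneg_iff.2 hu
  have hquad : Real.sinh u / (2 * u) * a ^ 2 ≤ Real.cosh u * (Real.exp a - a - 1) := by
    have hexp : a ^ 2 / 2 ≤ Real.exp a - a - 1 := by
      linarith [Real.quadratic_le_exp_of_nonneg ha]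
    have hratio := sinh_div_two_mul_le hu
    calc Real.sinh u / (2 * u) * a ^ 2 ≤ Real.cosh u / 2 * a ^ 2 := by gcongr
      _ = Real.cosh u * (a ^ 2 / 2) := by ring
      _ ≤ Real.cosh u * (Real.exp a - a - 1) := by gcongr
  have hlinear : τ * a * Real.sinh u ≤
      Real.sinh u / (2 * u) * ℓ + (γ - 1) * (Real.cosh u * (Real.exp a - a - 1)) := by
    calc τ * a * Real.sinh u = Real.sinh u / (2 * u) * (2 * u * a * τ) := by
          rcases hu.eq_or_lt with rfl | hu0
          · simp
          · field_simp
      _ ≤ Real.sinh u / (2 * u) * (ℓ + (γ - 1) * a ^ 2) := by gcongr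
      _ = Real.sinh u / (2 * u) * ℓ + (γ - 1) * (Real.sinh u / (2 * u) * a ^ 2) := by ring
      _ ≤ _ := by gcongr
  have hexcess : τ * Real.sinh u * (Real.sinh a - a) ≤ Real.cosh u * (Real.sinh a - a) := by
    gcongr
    · linarith [Real.self_le_sinh_iff.2 ha]
    · exact (mul_le_of_le_one_left hsinh hτ).trans (Real.sinh_lt_cosh u).le
  rw [← Real.cosh_add_sinh a] at hlinear ⊢
  linarith

theorem exp_sub_self_sub_one_le {a b : ℝ} (ha : 0 ≤ a) (hb : 0 < b) (hab : a ≤ b) :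
    Real.exp a - a - 1 ≤ (Real.exp b - b - 1) / b ^ 2 * a ^ 2 := by
  have hseries (x : ℝ) : HasSum (fun n : ℕ ↦ x ^ (n + 2) / ((n + 2).factorial : ℝ))
      (Real.exp x - x - 1) := by
    have htail := (hasSum_nat_add_iff' 2).2 (NormedSpace.expSeries_div_hasSum_exp x)
    rw [← Real.exp_eq_exp_ℝ] at htail
    simpa [Finset.sum_range_succ, sub_sub, add_comm] using htail
  have hterm (n : ℕ) : a ^ (n + 2) / ((n + 2).factorial : ℝ) ≤
      a ^ 2 / b ^ 2 * (b ^ (n + 2) / ((n + 2).factorial : ℝ)) := by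
    calc a ^ (n + 2) / ((n + 2).factorial : ℝ)
        ≤ a ^ 2 * b ^ n / ((n + 2).factorial : ℝ) := by rw [add_comm, pow_add]; gcongr
      _ = a ^ 2 / b ^ 2 * (b ^ (n + 2) / ((n + 2).factorial : ℝ)) := by field_simp; ring
  calc Real.exp a - a - 1 ≤ a ^ 2 / b ^ 2 * (Real.exp b - b - 1) :=
        hasSum_le hterm (hseries a) ((hseries b).mul_left _)
    _ = (Real.exp b - b - 1) / b ^ 2 * a ^ 2 := by ring

end Hyperbolic

section CoshNorm

variable {B : Type*} [NormedAddCommGroup B] [NormedSpace ℝ B] {β : ℝ}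

/-- The gradient of `x ↦ cosh ‖x‖` when the norm is `(2, β)`-smooth; at `x = 0`, where the
coefficient is the junk value `0 / 0 = 0`, it vanishes as it should. -/
noncomputable def coshNormGrad (x : B) : StrongDual ℝ B :=
  (Real.sinh ‖x‖ / (2 * ‖x‖)) • sqNormGrad x

theorem norm_coshNormGrad_le (x : B) : ‖coshNormGrad x‖ ≤ Real.sinh ‖x‖ := by
  have hsinh : 0 ≤ Real.sinh ‖x‖ := Real.sinh_nonneg_iff.2 (norm_nonneg x)
  rw [coshNormGrad, norm_smul, Real.norm_of_nonneg (by positivity)]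
  rcases eq_or_ne x 0 with rfl | hx
  · simp
  · rw [div_mul_eq_mul_div, div_le_iff₀ (by positivity)]
    gcongr
    exact norm_sqNormGrad_le x

/-- Pinelis' second-order bound for the hyperbolic cosine of a smooth norm. -/
theorem IsTwoSmooth.cosh_norm_add_le (h : IsTwoSmooth B β) (x w : B) :
    Real.cosh ‖x + w‖ ≤ Real.cosh ‖x‖ + coshNormGrad x w +
      β ^ 2 * (Real.cosh ‖x‖ * (Real.exp ‖w‖ - ‖w‖ - 1)) := by
  rcases eq_or_ne w 0 with rfl | hw
  · simp
  have hβ := h.one_le_sq hw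
  have hsmooth := h.norm_add_sq_le x w
  obtain ⟨τ, hτ, hnorm, hcosh⟩ := exists_cosh_le_of_abs_sub_le (norm_nonneg x) (norm_nonneg w)
    (by simpa using abs_norm_sub_norm_le x (-w)) (norm_add_le x w)
  exact hcosh.trans (cosh_mul_cosh_add_le (norm_nonneg x) (norm_nonneg w) hτ hβ
    (ℓ := sqNormGrad x w) (by linarith))

end CoshNorm

section Martingale

variable {B Ω : Type*} [NormedAddCommGroup B] {m mΩ : MeasurableSpace Ω} {P : Measure Ω}

theorem integrable_comp_norm_of_bound [IsFiniteMeasure P] {φ : ℝ → ℝ} (hφ : Continuous φ)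
    {f : Ω → B} {R : ℝ} (hf : AEStronglyMeasurable f P) (hfR : ∀ᵐ ω ∂P, ‖f ω‖ ≤ R) :
    Integrable (fun ω ↦ φ ‖f ω‖) P := by
  obtain ⟨C, hC⟩ := (isCompact_Icc (a := 0) (b := R)).exists_bound_of_continuousOn hφ.continuousOn
  exact .of_bound (hφ.comp_aestronglyMeasurable hf.norm) C
    (hfR.mono fun ω hω ↦ hC _ ⟨norm_nonneg _, hω⟩)

variable {ℱ : Filtration ℕ mΩ} {D : ℕ → Ω → B} {b κ : ℝ}

theorem norm_sum_range_le_ae (hDb : ∀ i, ∀ᵐ ω ∂P, ‖D i ω‖ ≤ b) (n : ℕ) :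
    ∀ᵐ ω ∂P, ‖∑ i ∈ Finset.range n, D i ω‖ ≤ n * b := by
  filter_upwards [ae_all_iff.2 hDb] with ω hω
  simpa using norm_sum_le_of_le (Finset.range n) fun i _ ↦ hω i

theorem stronglyMeasurable_sum_range_of_adapted
    (hD : ∀ i, StronglyMeasurable[ℱ (i + 1)] (D i)) (n : ℕ) :
    StronglyMeasurable[ℱ n] fun ω ↦ ∑ i ∈ Finset.range n, D i ω :=
  Finset.stronglyMeasurable_fun_sum _ fun i hi ↦ (hD i).mono (ℱ.mono (Finset.mem_range.1 hi))

theorem integrable_cosh_norm_sum_range [IsFiniteMeasure P]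
    (hD : ∀ i, StronglyMeasurable[ℱ (i + 1)] (D i)) (hDb : ∀ i, ∀ᵐ ω ∂P, ‖D i ω‖ ≤ b) (n : ℕ) :
    Integrable (fun ω ↦ Real.cosh ‖∑ i ∈ Finset.range n, D i ω‖) P :=
  integrable_comp_norm_of_bound Real.continuous_cosh
    ((stronglyMeasurable_sum_range_of_adapted hD n).mono (ℱ.le n)).aestronglyMeasurable
    (norm_sum_range_le_ae hDb n)

variable [NormedSpace ℝ B] {β : ℝ}

theorem IsTwoSmooth.stronglyMeasurable_coshNormGrad (h : IsTwoSmooth B β) {S : Ω → B}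
    (hS : StronglyMeasurable[m] S) : StronglyMeasurable[m] fun ω ↦ coshNormGrad (S ω) :=
  ((Real.continuous_sinh.comp_stronglyMeasurable hS.norm).div (hS.norm.const_mul 2)).smul
    (h.lipschitzWith_sqNormGrad.continuous.comp_stronglyMeasurable hS)

theorem IsTwoSmooth.integrable_coshNormGrad_apply [IsFiniteMeasure P] (h : IsTwoSmooth B β)
    {S D : Ω → B} {R b : ℝ} (hS : StronglyMeasurable S) (hSR : ∀ᵐ ω ∂P, ‖S ω‖ ≤ R)
    (hD : AEStronglyMeasurable D P) (hDb : ∀ᵐ ω ∂P, ‖D ω‖ ≤ b) :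
    Integrable (fun ω ↦ coshNormGrad (S ω) (D ω)) P := by
  refine .of_bound ((ContinuousLinearMap.id ℝ (StrongDual ℝ B)).aestronglyMeasurable_comp₂
    (h.stronglyMeasurable_coshNormGrad hS).aestronglyMeasurable hD) (Real.sinh R * b) ?_
  filter_upwards [hSR, hDb] with ω hω hω'
  exact (coshNormGrad (S ω)).le_of_opNorm_le_of_le
    ((norm_coshNormGrad_le _).trans (Real.sinh_le_sinh.2 hω)) hω'

variable [CompleteSpace B]

theorem condExp_clm_apply_ae_eq_zero {E : Type*} [NormedAddCommGroup E] [NormedSpace ℝ E]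
    [CompleteSpace E] {L : Ω → B →L[ℝ] E} {D : Ω → B}
    (hL : StronglyMeasurable[m] L) (hLD : Integrable (fun ω ↦ L ω (D ω)) P)
    (hD : Integrable D P) (hD0 : P[D | m] =ᵐ[P] 0) :
    P[fun ω ↦ L ω (D ω) | m] =ᵐ[P] 0 := by
  filter_upwards [condExp_bilin_of_stronglyMeasurable_left (ContinuousLinearMap.id ℝ (B →L[ℝ] E))
    hL hLD hD, hD0] with ω hω h0
  simpa [h0] using hω

theorem IsTwoSmooth.condExp_cosh_norm_add_le [IsFiniteMeasure P] (h : IsTwoSmooth B β)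
    (hm : m ≤ mΩ) {S D : Ω → B} {R b : ℝ} (hS : StronglyMeasurable[m] S)
    (hSR : ∀ᵐ ω ∂P, ‖S ω‖ ≤ R) (hD : AEStronglyMeasurable D P) (hDb : ∀ᵐ ω ∂P, ‖D ω‖ ≤ b)
    (hD0 : P[D | m] =ᵐ[P] 0) :
    P[fun ω ↦ Real.cosh ‖S ω + D ω‖ | m] ≤ᵐ[P] fun ω ↦ Real.cosh ‖S ω‖ *
      (1 + β ^ 2 * P[fun ω ↦ Real.exp ‖D ω‖ - ‖D ω‖ - 1 | m] ω) := by
  have hSm := (hS.mono hm).aestronglyMeasurable (μ := P)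
  have hcoshS : StronglyMeasurable[m] fun ω ↦ Real.cosh ‖S ω‖ :=
    Real.continuous_cosh.comp_stronglyMeasurable hS.norm
  have hcoshS_int : Integrable (fun ω ↦ Real.cosh ‖S ω‖) P :=
    integrable_comp_norm_of_bound Real.continuous_cosh hSm hSR
  have hcoshSD_int : Integrable (fun ω ↦ Real.cosh ‖S ω + D ω‖) P := by
    refine integrable_comp_norm_of_bound Real.continuous_cosh (hSm.add hD) (R := R + b) ?_
    filter_upwards [hSR, hDb] with ω hω hω' using norm_add_le_of_le hω hω'
  have hD_int : Integrable D P := .of_bound hD b hDb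
  have hexp_int : Integrable (fun ω ↦ Real.exp ‖D ω‖ - ‖D ω‖ - 1) P :=
    integrable_comp_norm_of_bound (φ := fun t ↦ Real.exp t - t - 1) (by fun_prop) hD hDb
  have hquad_int :
      Integrable ((fun ω ↦ Real.cosh ‖S ω‖) * fun ω ↦ Real.exp ‖D ω‖ - ‖D ω‖ - 1) P := by
    refine hexp_int.bdd_mul hcoshS_int.1 (c := Real.cosh R) ?_
    filter_upwards [hSR] with ω hω
    rw [Real.norm_of_nonneg (Real.cosh_pos _).le]
    exact Real.cosh_le_cosh.2 (abs_le_abs_of_nonneg (norm_nonneg _) hω)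
  have hlin_int := h.integrable_coshNormGrad_apply (hS.mono hm) hSR hD hDb
  have hmono := condExp_mono (m := m) hcoshSD_int
    ((hcoshS_int.add hlin_int).add (hquad_int.smul (β ^ 2)))
    (.of_forall fun ω ↦ h.cosh_norm_add_le (S ω) (D ω))
  filter_upwards [hmono, condExp_add (hcoshS_int.add hlin_int) (hquad_int.smul (β ^ 2)) m,
    condExp_add hcoshS_int hlin_int m, condExp_clm_apply_ae_eq_zero
      (h.stronglyMeasurable_coshNormGrad hS) hlin_int hD_int hD0,
    condExp_smul (β ^ 2) ((fun ω ↦ Real.cosh ‖S ω‖) * fun ω ↦ Real.exp ‖D ω‖ - ‖D ω‖ - 1) m,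
    condExp_mul_of_stronglyMeasurable_left hcoshS hquad_int hexp_int]
    with ω hle hadd hadd' hlin hsmul hmul
  rw [condExp_of_stronglyMeasurable hm hcoshS hcoshS_int] at hadd'
  simp only [Pi.add_apply, Pi.smul_apply, Pi.mul_apply, Pi.zero_apply, smul_eq_mul] at *
  rw [hadd, hadd', hlin, hsmul, hmul] at hle
  linarith

variable [IsProbabilityMeasure P]

theorem IsTwoSmooth.integral_cosh_norm_sum_le (h : IsTwoSmooth B β)
    (hD : ∀ i, StronglyMeasurable[ℱ (i + 1)] (D i)) (hDb : ∀ i, ∀ᵐ ω ∂P, ‖D i ω‖ ≤ b)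
    (hD0 : ∀ i, P[D i | ℱ i] =ᵐ[P] 0)
    (hκ : ∀ i, ∀ᵐ ω ∂P, P[fun ω ↦ Real.exp ‖D i ω‖ - ‖D i ω‖ - 1 | ℱ i] ω ≤ κ) (n : ℕ) :
    ∫ ω, Real.cosh ‖∑ i ∈ Finset.range n, D i ω‖ ∂P ≤ Real.exp (n * (β ^ 2 * κ)) := by
  induction n with
  | zero => simp
  | succ n ih =>
    have hstep := h.condExp_cosh_norm_add_le (ℱ.le n)
      (stronglyMeasurable_sum_range_of_adapted hD n) (norm_sum_range_le_ae hDb n)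
      ((hD n).mono (ℱ.le _)).aestronglyMeasurable (hDb n) (hD0 n)
    simp only [Finset.sum_range_succ]
    calc ∫ ω, Real.cosh ‖∑ i ∈ Finset.range n, D i ω + D n ω‖ ∂P
        ≤ ∫ ω, Real.cosh ‖∑ i ∈ Finset.range n, D i ω‖ * Real.exp (β ^ 2 * κ) ∂P := by
          rw [← integral_condExp (ℱ.le n)]
          refine integral_mono_ae integrable_condExp
            ((integrable_cosh_norm_sum_range hD hDb n).mul_const _) ?_
          filter_upwards [hstep, hκ n] with ω hω hωκ
          refine hω.trans ?_
          gcongr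
          linarith [Real.add_one_le_exp (β ^ 2 * κ), mul_le_mul_of_nonneg_left hωκ (sq_nonneg β)]
      _ ≤ Real.exp (n * (β ^ 2 * κ)) * Real.exp (β ^ 2 * κ) := by
          rw [integral_mul_const]
          gcongr
      _ = Real.exp ((n + 1 : ℕ) * (β ^ 2 * κ)) := by
          rw [← Real.exp_add]
          push_cast
          ring_nf

theorem IsTwoSmooth.measure_le_norm_sum_le (h : IsTwoSmooth B β)
    (hD : ∀ i, StronglyMeasurable[ℱ (i + 1)] (D i)) (hDb : ∀ i, ∀ᵐ ω ∂P, ‖D i ω‖ ≤ b)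
    (hD0 : ∀ i, P[D i | ℱ i] =ᵐ[P] 0)
    (hκ : ∀ i, ∀ᵐ ω ∂P, P[fun ω ↦ Real.exp ‖D i ω‖ - ‖D i ω‖ - 1 | ℱ i] ω ≤ κ) (n : ℕ)
    {δ : ℝ} (hδ : 0 < δ) :
    P {ω | Real.log (2 / δ) + n * (β ^ 2 * κ) ≤ ‖∑ i ∈ Finset.range n, D i ω‖} ≤
      ENNReal.ofReal δ := by
  set S := fun ω ↦ ∑ i ∈ Finset.range n, D i ω
  set c := n * (β ^ 2 * κ)
  have hsub : {ω | Real.log (2 / δ) + c ≤ ‖S ω‖} ⊆ {ω | Real.exp c / δ ≤ Real.cosh ‖S ω‖} := by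
    intro ω (hω : Real.log (2 / δ) + c ≤ ‖S ω‖)
    calc Real.exp c / δ = Real.exp (Real.log (2 / δ) + c) / 2 := by
          rw [Real.exp_add, Real.exp_log (by positivity)]; ring
      _ ≤ (Real.exp ‖S ω‖ + Real.exp (-‖S ω‖)) / 2 := by
          have := Real.exp_le_exp.2 hω
          have := Real.exp_pos (-‖S ω‖)
          linarith
      _ = Real.cosh ‖S ω‖ := (Real.cosh_eq _).symm
  have hmarkov : Real.exp c / δ * P.real {ω | Real.exp c / δ ≤ Real.cosh ‖S ω‖} ≤ Real.exp c :=
    (mul_meas_ge_le_integral_of_nonneg (.of_forall fun ω ↦ (Real.cosh_pos _).le)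
      (integrable_cosh_norm_sum_range hD hDb n) _).trans
      (h.integral_cosh_norm_sum_le hD hDb hD0 hκ n)
  rw [div_mul_eq_mul_div, div_le_iff₀ hδ] at hmarkov
  refine (measure_mono hsub).trans ?_
  rw [← ofReal_measureReal]
  exact ENNReal.ofReal_le_ofReal (le_of_mul_le_mul_left hmarkov (Real.exp_pos c))

end Martingale

section Truncation

variable {B : Type*} [NormedAddCommGroup B] {p : ℝ}

theorem Kp_nonneg (hp : 1 ≤ p) : 0 ≤ Kp p := by
  have : 0 ≤ p - 1 := sub_nonneg.2 hp
  unfold Kp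
  positivity

theorem frakC_pos (p : ℝ) {ρ : ℝ} (hρ : 0 < ρ) : 0 < frakC p ρ := by
  have := Real.add_one_lt_exp (mul_pos two_pos hρ).ne'
  exact div_pos (mul_pos (by positivity) (by linarith)) (by positivity)

/- Bernoulli's inequality at `(p - 1) / p * t`, i.e. the tangent line of the convex function
`Kp p * t ^ p` at `t = p / (p - 1)`. -/
theorem sub_one_le_Kp_mul_rpow (hp : 1 ≤ p) {t : ℝ} (ht : 0 ≤ t) : t - 1 ≤ Kp p * t ^ p := by
  rcases hp.eq_or_lt with rfl | hp
  · simp [Kp]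
  have hp1 : 0 < p - 1 := sub_pos.2 hp
  have hq : 0 < (p - 1) / p := by positivity
  have hbernoulli := one_add_mul_self_le_rpow_one_add (s := (p - 1) / p * t - 1)
    (by linarith [mul_nonneg hq.le ht]) hp.le
  rw [add_sub_cancel, Real.mul_rpow hq.le ht] at hbernoulli
  refine le_of_mul_le_mul_left (a := p - 1) ?_ hp1
  calc (p - 1) * (t - 1) = 1 + p * ((p - 1) / p * t - 1) := by field_simp; ring
    _ ≤ ((p - 1) / p) ^ p * t ^ p := hbernoulli
    _ = ((p - 1) / p) ^ (p - 1) * ((p - 1) / p) * t ^ p := by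
      rw [← Real.rpow_add_one hq.ne', sub_add_cancel]
    _ = (p - 1) * (Kp p * t ^ p) := by rw [Kp]; ring

theorem norm_sub_rpow_le (hp : 1 ≤ p) (x y z : B) :
    ‖x - z‖ ^ p ≤ 2 ^ (p - 1) * (‖x - y‖ ^ p + ‖y - z‖ ^ p) := by
  refine (Real.rpow_le_rpow (norm_nonneg _) (norm_sub_le_norm_sub_add_norm_sub x y z)
    (by linarith)).trans ?_
  exact_mod_cast NNReal.rpow_add_le_mul_rpow_add_rpow ‖x - y‖₊ ‖y - z‖₊ hp

variable [NormedSpace ℝ B]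

/-- The radial projection of `x` onto the closed unit ball. -/
noncomputable def ballProj (x : B) : B := truncB x • x

theorem ballProj_eq_inv_max_smul (x : B) : ballProj x = (max 1 ‖x‖)⁻¹ • x := by
  rcases eq_or_ne x 0 with rfl | hx
  · simp [ballProj]
  rw [ballProj, truncB, if_neg hx]
  congr 1
  have hpos : 0 < ‖x‖ := norm_pos_iff.2 hx
  rcases le_total 1 ‖x‖ with h1 | h1
  · rw [min_eq_left h1, max_eq_right h1, one_div]
  · rw [min_eq_right h1, max_eq_left h1, div_self hpos.ne', inv_one]

theorem ballProj_of_norm_le_one {x : B} (hx : ‖x‖ ≤ 1) : ballProj x = x := by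
  rw [ballProj_eq_inv_max_smul, max_eq_left hx, inv_one, one_smul]

theorem continuous_ballProj : Continuous (ballProj : B → B) := by
  simp only [funext ballProj_eq_inv_max_smul]
  exact (Continuous.inv₀ (by fun_prop) fun x ↦ by positivity).smul continuous_id

theorem norm_ballProj_le_one (x : B) : ‖ballProj x‖ ≤ 1 := by
  rw [ballProj_eq_inv_max_smul, norm_smul, Real.norm_of_nonneg (by positivity),
    inv_mul_le_iff₀ (by positivity), mul_one]
  exact le_max_right 1 ‖x‖

theorem norm_ballProj_sq_le_rpow (hp0 : 0 ≤ p) (hp2 : p ≤ 2) (x : B) :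
    ‖ballProj x‖ ^ 2 ≤ ‖x‖ ^ p := by
  rcases le_total 1 ‖x‖ with h1 | h1
  · exact (pow_le_one₀ (norm_nonneg _) (norm_ballProj_le_one x)).trans (Real.one_le_rpow h1 hp0)
  · rw [ballProj_of_norm_le_one h1, ← Real.rpow_two]
    exact Real.rpow_le_rpow_of_exponent_ge' (norm_nonneg _) h1 hp0 hp2

theorem norm_ballProj_sub_le (hp : 1 ≤ p) (x : B) : ‖ballProj x - x‖ ≤ Kp p * ‖x‖ ^ p := by
  rcases le_total 1 ‖x‖ with h1 | h1
  · have hdiff : ballProj x - x = -((1 - ‖x‖⁻¹) • x) := by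
      rw [ballProj_eq_inv_max_smul, max_eq_right h1]
      module
    calc ‖ballProj x - x‖ = ‖x‖ - 1 := by
          rw [hdiff, norm_neg, norm_smul,
            Real.norm_of_nonneg (sub_nonneg.2 (inv_le_one_of_one_le₀ h1)), sub_mul, one_mul,
            inv_mul_cancel₀ (by positivity)]
      _ ≤ Kp p * ‖x‖ ^ p := sub_one_le_Kp_mul_rpow hp (norm_nonneg x)
  · rw [ballProj_of_norm_le_one h1, sub_self, norm_zero]
    exact mul_nonneg (Kp_nonneg hp) (by positivity)

end Truncation

section ConditionalMoments

variable {B Ω : Type*} [NormedAddCommGroup B] {m mΩ : MeasurableSpace Ω} {P : Measure Ω}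
  {p : ℝ} {W Y : Ω → B}

theorem memLp_ofReal_iff_integrable_norm_rpow (hp : 0 < p) (hY : AEStronglyMeasurable Y P) :
    MemLp Y (ENNReal.ofReal p) P ↔ Integrable (fun ω ↦ ‖Y ω‖ ^ p) P := by
  rw [← integrable_norm_rpow_iff hY (by simpa using hp) ENNReal.ofReal_ne_top,
    ENNReal.toReal_ofReal hp.le]

theorem integrable_of_memLp_ofReal [IsFiniteMeasure P] (hp : 1 ≤ p)
    (hY : MemLp Y (ENNReal.ofReal p) P) : Integrable Y P :=
  hY.integrable (ENNReal.one_le_ofReal.2 hp)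

variable [NormedSpace ℝ B]

theorem memLp_ballProj_comp [IsFiniteMeasure P] (q : ENNReal) (hY : AEStronglyMeasurable Y P) :
    MemLp (fun ω ↦ ballProj (Y ω)) q P :=
  .of_bound (continuous_ballProj.comp_aestronglyMeasurable hY) 1
    (.of_forall fun _ ↦ norm_ballProj_le_one _)

theorem condExp_norm_smul_sub_rpow_le [IsFiniteMeasure P] (hm : m ≤ mΩ) {lam v r : ℝ} {μ : B}
    {X Z : Ω → B} (hlam : 0 ≤ lam) (hp : 1 ≤ p) (hX : MemLp X (ENNReal.ofReal p) P)
    (hv : ∀ᵐ ω ∂P, P[fun ω ↦ ‖X ω - μ‖ ^ p | m] ω ≤ v)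
    (hZ : MemLp Z (ENNReal.ofReal p) P) (hZr : ∀ ω, ‖μ - Z ω‖ ≤ r) :
    ∀ᵐ ω ∂P, P[fun ω ↦ ‖lam • (X ω - Z ω)‖ ^ p | m] ω ≤
      lam ^ p * (2 ^ (p - 1) * (v + r ^ p)) := by
  have hp0 : 0 < p := by linarith
  have hXμ := hX.sub (memLp_const μ)
  have hint : Integrable (fun ω ↦ ‖X ω - μ‖ ^ p) P :=
    (memLp_ofReal_iff_integrable_norm_rpow hp0 hXμ.1).1 hXμ
  have hYp : MemLp (fun ω ↦ lam • (X ω - Z ω)) (ENNReal.ofReal p) P := (hX.sub hZ).const_smul lam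
  have hmono : P[fun ω ↦ ‖lam • (X ω - Z ω)‖ ^ p | m] ≤ᵐ[P]
      P[(lam ^ p * 2 ^ (p - 1)) • ((fun ω ↦ ‖X ω - μ‖ ^ p) + fun _ ↦ r ^ p) | m] := by
    refine condExp_mono ((memLp_ofReal_iff_integrable_norm_rpow hp0 hYp.1).1 hYp)
      ((hint.add (integrable_const _)).smul _) (.of_forall fun ω ↦ ?_)
    calc ‖lam • (X ω - Z ω)‖ ^ p = lam ^ p * ‖X ω - Z ω‖ ^ p := by
          rw [norm_smul, Real.norm_of_nonneg hlam, Real.mul_rpow hlam (norm_nonneg _)]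
      _ ≤ lam ^ p * (2 ^ (p - 1) * (‖X ω - μ‖ ^ p + r ^ p)) := by
          gcongr
          refine (norm_sub_rpow_le hp _ μ _).trans ?_
          gcongr
          exact hZr ω
      _ = lam ^ p * 2 ^ (p - 1) * (‖X ω - μ‖ ^ p + r ^ p) := (mul_assoc _ _ _).symm
  filter_upwards [hmono, condExp_smul (lam ^ p * 2 ^ (p - 1))
    ((fun ω ↦ ‖X ω - μ‖ ^ p) + fun _ ↦ r ^ p) m,
    condExp_add hint (integrable_const (r ^ p)) m, hv] with ω hle hsmul hadd hωv
  rw [hsmul, Pi.smul_apply, hadd, Pi.add_apply, condExp_const hm, smul_eq_mul, mul_assoc] at hle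
  exact hle.trans (by gcongr)

variable [CompleteSpace B]

theorem condExp_sub_condExp_ae_eq_zero [IsFiniteMeasure P] (hm : m ≤ mΩ) (hW : Integrable W P) :
    P[W - P[W | m] | m] =ᵐ[P] 0 := by
  filter_upwards [condExp_sub hW integrable_condExp m,
    condExp_condExp_of_le (μ := P) (f := W) le_rfl hm] with ω hsub hidem
  rw [hsub, Pi.sub_apply, hidem, sub_self, Pi.zero_apply]

theorem condExp_norm_sub_condExp_sq_le [IsFiniteMeasure P] (hm : m ≤ mΩ) (hW : MemLp W 2 P) :
    P[fun ω ↦ ‖W ω - P[W | m] ω‖ ^ 2 | m] ≤ᵐ[P] fun ω ↦ 4 * P[fun ω ↦ ‖W ω‖ ^ 2 | m] ω := by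
  have hE : MemLp P[W | m] 2 P := hW.condExp one_le_two
  have hWsq := hW.integrable_norm_pow two_ne_zero
  have hEsq := hE.integrable_norm_pow two_ne_zero
  have hE_le : (fun ω ↦ ‖P[W | m] ω‖ ^ 2) ≤ᵐ[P] P[fun ω ↦ ‖W ω‖ ^ 2 | m] := by
    simpa only [Real.rpow_two] using Integrable.norm_condExp_rpow_le (m := m) one_le_two
      (by simpa only [Real.rpow_two] using hWsq)
  have hmono : P[fun ω ↦ ‖W ω - P[W | m] ω‖ ^ 2 | m] ≤ᵐ[P]
      P[(2 : ℝ) • ((fun ω ↦ ‖W ω‖ ^ 2) + fun ω ↦ ‖P[W | m] ω‖ ^ 2) | m] :=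
    condExp_mono ((hW.sub hE).integrable_norm_pow two_ne_zero) ((hWsq.add hEsq).smul 2)
      (.of_forall fun ω ↦ (pow_le_pow_left₀ (norm_nonneg _) (norm_sub_le _ _) 2).trans add_sq_le)
  have hE_fix : P[fun ω ↦ ‖P[W | m] ω‖ ^ 2 | m] = fun ω ↦ ‖P[W | m] ω‖ ^ 2 :=
    condExp_of_stronglyMeasurable hm (stronglyMeasurable_condExp.norm.pow 2) hEsq
  filter_upwards [hmono, condExp_smul (2 : ℝ)
    ((fun ω ↦ ‖W ω‖ ^ 2) + fun ω ↦ ‖P[W | m] ω‖ ^ 2) m, condExp_add hWsq hEsq m, hE_le]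
    with ω hle hsmul hadd hjensen
  rw [hsmul, Pi.smul_apply, hadd, Pi.add_apply, hE_fix, smul_eq_mul] at hle
  linarith

variable [IsFiniteMeasure P]

theorem condExp_smul_sub_ae_eq (hm : m ≤ mΩ) (lam : ℝ) {μ : B}
    {X Z : Ω → B} (hX : Integrable X P) (hXμ : P[X | m] =ᵐ[P] fun _ ↦ μ)
    (hZ : StronglyMeasurable[m] Z) (hZ_int : Integrable Z P) :
    P[fun ω ↦ lam • (X ω - Z ω) | m] =ᵐ[P] fun ω ↦ lam • (μ - Z ω) := by
  filter_upwards [condExp_smul lam (X - Z) m, condExp_sub hX hZ_int m, hXμ] with ω hsmul hsub hω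
  rw [show (fun ω ↦ lam • (X ω - Z ω)) = lam • (X - Z) from rfl, hsmul, Pi.smul_apply, hsub,
    Pi.sub_apply, hω, condExp_of_stronglyMeasurable hm hZ hZ_int]

theorem norm_condExp_ballProj_sub_le (hp : 1 ≤ p) (hY : MemLp Y (ENNReal.ofReal p) P) :
    ∀ᵐ ω ∂P, ‖P[fun ω ↦ ballProj (Y ω) | m] ω - P[Y | m] ω‖ ≤
      Kp p * P[fun ω ↦ ‖Y ω‖ ^ p | m] ω := by
  have hYp := (memLp_ofReal_iff_integrable_norm_rpow (by linarith) hY.1).1 hY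
  have hY_int := integrable_of_memLp_ofReal hp hY
  have hproj_int := (memLp_ballProj_comp 1 hY.1).integrable le_rfl
  have hmono : P[fun ω ↦ ‖ballProj (Y ω) - Y ω‖ | m] ≤ᵐ[P] P[Kp p • fun ω ↦ ‖Y ω‖ ^ p | m] :=
    condExp_mono (hproj_int.sub hY_int).norm (hYp.smul _)
      (.of_forall fun ω ↦ norm_ballProj_sub_le hp (Y ω))
  filter_upwards [condExp_sub hproj_int hY_int m,
    norm_condExp_le (μ := P) (m := m) ((fun ω ↦ ballProj (Y ω)) - Y), hmono,
    condExp_smul (Kp p) (fun ω ↦ ‖Y ω‖ ^ p) m] with ω hsub hnorm hle hsmul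
  calc ‖P[fun ω ↦ ballProj (Y ω) | m] ω - P[Y | m] ω‖
      = ‖P[(fun ω ↦ ballProj (Y ω)) - Y | m] ω‖ := by rw [hsub, Pi.sub_apply]
    _ ≤ P[Kp p • fun ω ↦ ‖Y ω‖ ^ p | m] ω := hnorm.trans hle
    _ = Kp p * P[fun ω ↦ ‖Y ω‖ ^ p | m] ω := by rw [hsmul, Pi.smul_apply, smul_eq_mul]

theorem condExp_norm_ballProj_sub_condExp_sq_le (hm : m ≤ mΩ) (hp1 : 1 ≤ p) (hp2 : p ≤ 2)
    (hY : MemLp Y (ENNReal.ofReal p) P) :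
    P[fun ω ↦ ‖ballProj (Y ω) - P[fun ω ↦ ballProj (Y ω) | m] ω‖ ^ 2 | m] ≤ᵐ[P]
      fun ω ↦ 4 * P[fun ω ↦ ‖Y ω‖ ^ p | m] ω := by
  have hproj := memLp_ballProj_comp 2 hY.1
  have hmono : P[fun ω ↦ ‖ballProj (Y ω)‖ ^ 2 | m] ≤ᵐ[P] P[fun ω ↦ ‖Y ω‖ ^ p | m] :=
    condExp_mono (hproj.integrable_norm_pow two_ne_zero)
      ((memLp_ofReal_iff_integrable_norm_rpow (by linarith) hY.1).1 hY)
      (.of_forall fun ω ↦ norm_ballProj_sq_le_rpow (by linarith) hp2 (Y ω))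
  filter_upwards [condExp_norm_sub_condExp_sq_le hm hproj, hmono] with ω hle hle'
  linarith

end ConditionalMoments

section TruncatedIncrement

variable {B Ω : Type*} [NormedAddCommGroup B] [NormedSpace ℝ B] {m mΩ : MeasurableSpace Ω}
  {P : Measure Ω} {p ρ : ℝ} {Y : Ω → B}

/-- The martingale increment of the truncated samples: `ballProj ∘ Y` recentred at its conditional
mean given `m`, and rescaled by `ρ`. -/
noncomputable def truncIncr (P : Measure Ω) (m : MeasurableSpace Ω) (ρ : ℝ) (Y : Ω → B) : Ω → B :=
  ρ • ((fun ω ↦ ballProj (Y ω)) - P[fun ω ↦ ballProj (Y ω) | m])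

theorem norm_truncIncr_apply (hρ : 0 ≤ ρ) (ω : Ω) :
    ‖truncIncr P m ρ Y ω‖ = ρ * ‖ballProj (Y ω) - P[fun ω ↦ ballProj (Y ω) | m] ω‖ := by
  rw [truncIncr, Pi.smul_apply, norm_smul, Real.norm_of_nonneg hρ, Pi.sub_apply]

theorem stronglyMeasurable_truncIncr {m' : MeasurableSpace Ω} (hm : m ≤ m')
    (hY : StronglyMeasurable[m'] Y) : StronglyMeasurable[m'] (truncIncr P m ρ Y) :=
  ((continuous_ballProj.comp_stronglyMeasurable hY).sub
    (stronglyMeasurable_condExp.mono hm)).const_smul ρ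

variable [CompleteSpace B]

theorem norm_truncIncr_le_ae (hρ : 0 ≤ ρ) : ∀ᵐ ω ∂P, ‖truncIncr P m ρ Y ω‖ ≤ 2 * ρ := by
  filter_upwards [ae_bdd_norm_condExp_of_ae_bdd_norm (m := m)
    (.of_forall fun ω ↦ norm_ballProj_le_one (Y ω) : ∀ᵐ ω ∂P, ‖ballProj (Y ω)‖ ≤ 1)] with ω hω
  rw [norm_truncIncr_apply hρ, mul_comm]
  gcongr
  linarith [norm_sub_le_of_le (norm_ballProj_le_one (Y ω)) hω]

theorem exp_norm_truncIncr_sub_le_ae (p : ℝ) (hρ : 0 < ρ) :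
    ∀ᵐ ω ∂P, Real.exp ‖truncIncr P m ρ Y ω‖ - ‖truncIncr P m ρ Y ω‖ - 1 ≤
      frakC p ρ / 2 ^ (p + 1) * ρ ^ 2 *
        ‖ballProj (Y ω) - P[fun ω ↦ ballProj (Y ω) | m] ω‖ ^ 2 := by
  filter_upwards [norm_truncIncr_le_ae (P := P) (m := m) (Y := Y) hρ.le] with ω hω
  refine (exp_sub_self_sub_one_le (norm_nonneg _) (by positivity) hω).trans_eq ?_
  rw [norm_truncIncr_apply hρ.le, mul_pow ρ, ← mul_assoc, frakC, mul_div_assoc,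
    mul_div_cancel_left₀ _ (by positivity)]

variable [IsFiniteMeasure P]

theorem condExp_truncIncr_ae_eq_zero (hm : m ≤ mΩ) (hY : AEStronglyMeasurable Y P) :
    P[truncIncr P m ρ Y | m] =ᵐ[P] 0 := by
  filter_upwards [condExp_smul ρ ((fun ω ↦ ballProj (Y ω)) - P[fun ω ↦ ballProj (Y ω) | m]) m,
    condExp_sub_condExp_ae_eq_zero hm ((memLp_ballProj_comp 1 hY).integrable le_rfl)]
    with ω hsmul hzero
  rw [truncIncr, hsmul, Pi.smul_apply, hzero, Pi.zero_apply, smul_zero]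

theorem condExp_exp_norm_truncIncr_le (hm : m ≤ mΩ) (hρ : 0 < ρ) (hp1 : 1 ≤ p) (hp2 : p ≤ 2)
    (hY : MemLp Y (ENNReal.ofReal p) P) :
    P[fun ω ↦ Real.exp ‖truncIncr P m ρ Y ω‖ - ‖truncIncr P m ρ Y ω‖ - 1 | m] ≤ᵐ[P]
      fun ω ↦ ρ ^ 2 * frakC p ρ / 2 ^ (p - 1) * P[fun ω ↦ ‖Y ω‖ ^ p | m] ω := by
  set W := fun ω ↦ ballProj (Y ω)
  set C := frakC p ρ / 2 ^ (p + 1) * ρ ^ 2 with hC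
  have hC_nonneg : 0 ≤ C := by
    have := frakC_pos p hρ
    positivity
  have hW : MemLp W 2 P := memLp_ballProj_comp 2 hY.1
  have hD_meas : AEStronglyMeasurable (truncIncr P m ρ Y) P :=
    (hW.1.sub integrable_condExp.1).const_smul ρ
  have hmono : P[fun ω ↦ Real.exp ‖truncIncr P m ρ Y ω‖ - ‖truncIncr P m ρ Y ω‖ - 1 | m] ≤ᵐ[P]
      P[C • fun ω ↦ ‖W ω - P[W | m] ω‖ ^ 2 | m] :=
    condExp_mono (integrable_comp_norm_of_bound (φ := fun t ↦ Real.exp t - t - 1)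
      (by fun_prop) hD_meas (norm_truncIncr_le_ae hρ.le))
      (((hW.sub (hW.condExp one_le_two)).integrable_norm_pow two_ne_zero).smul _)
      (exp_norm_truncIncr_sub_le_ae p hρ)
  filter_upwards [hmono, condExp_smul C (fun ω ↦ ‖W ω - P[W | m] ω‖ ^ 2) m,
    condExp_norm_ballProj_sub_condExp_sq_le hm hp1 hp2 hY] with ω hle hsmul hsq
  rw [hsmul, Pi.smul_apply, smul_eq_mul] at hle
  calc _ ≤ C * P[fun ω ↦ ‖W ω - P[W | m] ω‖ ^ 2 | m] ω := hle
    _ ≤ C * (4 * P[fun ω ↦ ‖Y ω‖ ^ p | m] ω) := by gcongr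
    _ = ρ ^ 2 * frakC p ρ / 2 ^ (p - 1) * P[fun ω ↦ ‖Y ω‖ ^ p | m] ω := by
      rw [hC, show p + 1 = p - 1 + 2 by ring, Real.rpow_add two_pos, Real.rpow_two]
      field_simp
      norm_num

end TruncatedIncrement

section LineCrossing

variable {B Ω : Type*} [NormedAddCommGroup B] [NormedSpace ℝ B] [CompleteSpace B]
  {mΩ : MeasurableSpace Ω} {P : Measure Ω} [IsProbabilityMeasure P]
  {ℱ : Filtration ℕ mΩ} {β p δ : ℝ}

theorem IsTwoSmooth.measure_le_norm_sum_ballProj_sub_condExp_le (h : IsTwoSmooth B β)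
    {ρ A : ℝ} {Y : ℕ → Ω → B} (hρ : 0 < ρ) (hp1 : 1 ≤ p) (hp2 : p ≤ 2)
    (hY : ∀ i, StronglyMeasurable[ℱ (i + 1)] (Y i))
    (hYp : ∀ i, MemLp (Y i) (ENNReal.ofReal p) P)
    (hA : ∀ i, ∀ᵐ ω ∂P, P[fun ω ↦ ‖Y i ω‖ ^ p | ℱ i] ω ≤ A) (n : ℕ) (hδ : 0 < δ) :
    P {ω | Real.log (2 / δ) / ρ + n * ((β ^ 2 * ρ * frakC p ρ / 2 ^ (p - 1) + Kp p) * A) ≤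
        ‖∑ i ∈ Finset.range n, (ballProj (Y i ω) - P[Y i | ℱ i] ω)‖} ≤ ENNReal.ofReal δ := by
  set D := fun i ↦ truncIncr P (ℱ i) ρ (Y i)
  set κ := ρ ^ 2 * frakC p ρ / 2 ^ (p - 1) * A with hκ
  have hexp (i : ℕ) : ∀ᵐ ω ∂P, P[fun ω ↦ Real.exp ‖D i ω‖ - ‖D i ω‖ - 1 | ℱ i] ω ≤ κ := by
    filter_upwards [condExp_exp_norm_truncIncr_le (ℱ.le i) hρ hp1 hp2 (hYp i), hA i] with ω hω hωA
    refine hω.trans (mul_le_mul_of_nonneg_left hωA ?_)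
    have := frakC_pos p hρ
    positivity
  have hbias : ∀ᵐ ω ∂P, ‖∑ i ∈ Finset.range n,
      (P[fun ω ↦ ballProj (Y i ω) | ℱ i] ω - P[Y i | ℱ i] ω)‖ ≤ n * (Kp p * A) :=
    norm_sum_range_le_ae (D := fun i ω ↦ P[fun ω ↦ ballProj (Y i ω) | ℱ i] ω - P[Y i | ℱ i] ω)
      (fun i ↦ by
        filter_upwards [norm_condExp_ballProj_sub_le hp1 (hYp i), hA i] with ω hω hωA
        exact hω.trans (mul_le_mul_of_nonneg_left hωA (Kp_nonneg hp1))) n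
  refine (measure_mono_ae ?_).trans (h.measure_le_norm_sum_le
    (fun i ↦ stronglyMeasurable_truncIncr (ℱ.mono i.le_succ) (hY i))
    (fun i ↦ norm_truncIncr_le_ae hρ.le)
    (fun i ↦ condExp_truncIncr_ae_eq_zero (ℱ.le i) (hYp i).1) hexp n hδ)
  filter_upwards [hbias] with ω hω (hcross : _ ≤ ‖_‖)
  have hsum : ∑ i ∈ Finset.range n, (ballProj (Y i ω) - P[Y i | ℱ i] ω) =
      ρ⁻¹ • ∑ i ∈ Finset.range n, D i ω + ∑ i ∈ Finset.range n,
        (P[fun ω ↦ ballProj (Y i ω) | ℱ i] ω - P[Y i | ℱ i] ω) := by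
    simp only [D, truncIncr, Pi.smul_apply, Pi.sub_apply, ← Finset.smul_sum,
      inv_smul_smul₀ hρ.ne', ← Finset.sum_add_distrib, sub_add_sub_cancel]
  have hle := (hcross.trans_eq (by rw [hsum])).trans (norm_add_le_of_le le_rfl hω)
  rw [norm_smul, Real.norm_of_nonneg (inv_nonneg.2 hρ.le)] at hle
  change Real.log (2 / δ) + n * (β ^ 2 * κ) ≤ ‖∑ i ∈ Finset.range n, D i ω‖
  refine le_of_mul_le_mul_left (a := ρ⁻¹) ?_ (inv_pos.2 hρ)
  have hρκ : ρ⁻¹ * κ = ρ * frakC p ρ / 2 ^ (p - 1) * A := by rw [hκ]; field_simp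
  linear_combination hle + n * β ^ 2 * hρκ

/-- The constant in front of `v + r ^ p` in the deviation bound of the truncated mean: the
martingale part contributes `β 𝔠_p`, the truncation bias `K_p 2^{p-1}`. -/
noncomputable def devConst (β p : ℝ) : ℝ := β * frakC p (1 / β) + Kp p * 2 ^ (p - 1)

theorem devConst_pos (hβ : 0 < β) (hp : 1 ≤ p) : 0 < devConst β p := by
  have := frakC_pos p (one_div_pos.2 hβ)
  have := Kp_nonneg hp
  unfold devConst
  positivity

variable {lam v r : ℝ} {μ : B} {X : ℕ → Ω → B} {Z : Ω → B}

theorem IsTwoSmooth.measure_le_norm_sum_ballProj_sub_le_of_norm_sub_le (h : IsTwoSmooth B β)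
    (hβ : 0 < β) (hp1 : 1 ≤ p) (hp2 : p ≤ 2)
    (hX_meas : ∀ i, StronglyMeasurable[ℱ (i + 1)] (X i))
    (hX : ∀ i, MemLp (X i) (ENNReal.ofReal p) P)
    (hXμ : ∀ i, P[X i | ℱ i] =ᵐ[P] fun _ ↦ μ)
    (hXv : ∀ i, ∀ᵐ ω ∂P, P[fun ω ↦ ‖X i ω - μ‖ ^ p | ℱ i] ω ≤ v)
    (hZ : StronglyMeasurable[ℱ 0] Z) (hZr : ∀ ω, ‖μ - Z ω‖ ≤ r) (hlam : 0 ≤ lam) (n : ℕ)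
    (hδ : 0 < δ) :
    P {ω | β * Real.log (2 / δ) + n * (devConst β p * (v + r ^ p) * lam ^ p) ≤
        ‖∑ i ∈ Finset.range n, (ballProj (lam • (X i ω - Z ω)) - lam • (μ - Z ω))‖} ≤
      ENNReal.ofReal δ := by
  have hZ_Lp (q : ENNReal) : MemLp Z q P := by
    simpa using (memLp_const μ).sub (.of_bound
      (stronglyMeasurable_const.sub (hZ.mono (ℱ.le 0))).aestronglyMeasurable r (.of_forall hZr))
  have hcondMean (i : ℕ) :=
    condExp_smul_sub_ae_eq (ℱ.le i) lam (integrable_of_memLp_ofReal hp1 (hX i)) (hXμ i)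
      (hZ.mono (ℱ.mono i.zero_le)) ((hZ_Lp 1).integrable le_rfl)
  refine (measure_mono_ae ?_).trans
    (h.measure_le_norm_sum_ballProj_sub_condExp_le (one_div_pos.2 hβ) hp1 hp2
      (fun i ↦ ((hX_meas i).sub (hZ.mono (ℱ.mono (i + 1).zero_le))).const_smul lam)
      (fun i ↦ ((hX i).sub (hZ_Lp _)).const_smul lam)
      (fun i ↦ condExp_norm_smul_sub_rpow_le (ℱ.le i) hlam hp1 (hX i) (hXv i) (hZ_Lp _) hZr) n hδ)
  filter_upwards [ae_all_iff.2 hcondMean] with ω hω (hcross : _ ≤ ‖_‖)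
  refine le_trans (le_of_eq ?_) (hcross.trans_eq ?_)
  · rw [devConst]
    field_simp
  · congr 1
    exact Finset.sum_congr rfl fun i _ ↦ by rw [← hω i]; rfl

/- Off the event `r ≤ ‖μ - Z‖` the centre `Z` agrees with one that is within `r` of `μ` surely. -/
theorem IsTwoSmooth.measure_le_norm_sum_ballProj_sub_le (h : IsTwoSmooth B β)
    (hβ : 0 < β) (hp1 : 1 ≤ p) (hp2 : p ≤ 2)
    (hX_meas : ∀ i, StronglyMeasurable[ℱ (i + 1)] (X i))
    (hX : ∀ i, MemLp (X i) (ENNReal.ofReal p) P)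
    (hXμ : ∀ i, P[X i | ℱ i] =ᵐ[P] fun _ ↦ μ)
    (hXv : ∀ i, ∀ᵐ ω ∂P, P[fun ω ↦ ‖X i ω - μ‖ ^ p | ℱ i] ω ≤ v)
    (hZ : StronglyMeasurable[ℱ 0] Z) (hr : 0 ≤ r) (hlam : 0 ≤ lam) (n : ℕ) (hδ : 0 < δ) :
    P {ω | β * Real.log (2 / δ) + n * (devConst β p * (v + r ^ p) * lam ^ p) ≤
        ‖∑ i ∈ Finset.range n, (ballProj (lam • (X i ω - Z ω)) - lam • (μ - Z ω))‖} ≤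
      ENNReal.ofReal δ + P {ω | r ≤ ‖μ - Z ω‖} := by
  set Z' : Ω → B := fun ω ↦ if ‖μ - Z ω‖ < r then Z ω else μ
  have hZ' : StronglyMeasurable[ℱ 0] Z' :=
    .ite (measurableSet_lt (stronglyMeasurable_const.sub hZ).norm.measurable measurable_const)
      hZ stronglyMeasurable_const
  have hZ'r (ω : Ω) : ‖μ - Z' ω‖ ≤ r := by
    by_cases hω : ‖μ - Z ω‖ < r
    · simpa [Z', hω] using hω.le
    · simpa [Z', hω] using hr
  refine (measure_mono fun ω hω ↦ ?_).trans ((measure_union_le _ _).trans (add_le_add_left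
    (h.measure_le_norm_sum_ballProj_sub_le_of_norm_sub_le hβ hp1 hp2 hX_meas hX hXμ hXv hZ' hZ'r
      hlam n hδ) _))
  rcases lt_or_ge ‖μ - Z ω‖ r with hlt | hge
  · left
    simpa [Z', hlt] using hω
  · exact .inr hge

end LineCrossing

section TruncatedMean

variable {B : Type*} [NormedAddCommGroup B] [NormedSpace ℝ B]

/-- The truncated mean `μ̂_N(k)` of `x (k + 1), …, x N`, with centre `z` and truncation level
`1 / lam`. -/
noncomputable def truncMean (lam : ℝ) (x : ℕ → B) (z : B) (k N : ℕ) : B :=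
  ((N : ℝ) - k)⁻¹ • ∑ m ∈ Finset.Ioc k N, (truncB (lam • (x m - z)) • (x m - z) + z)

theorem norm_sum_ballProj_sub_eq {lam : ℝ} (hlam : 0 ≤ lam) (x : ℕ → B) (z μ : B) {k N : ℕ}
    (hN : k < N) :
    ‖∑ i ∈ Finset.range (N - k), (ballProj (lam • (x (k + i + 1) - z)) - lam • (μ - z))‖ =
      lam * ((N : ℝ) - k) * ‖truncMean lam x z k N - μ‖ := by
  have hn : 0 < (N : ℝ) - k := sub_pos.2 (by exact_mod_cast hN)
  have hterm (m : ℕ) : ballProj (lam • (x m - z)) - lam • (μ - z) =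
      lam • (truncB (lam • (x m - z)) • (x m - z) + z - μ) := by
    rw [ballProj]
    module
  have hreindex : ∑ i ∈ Finset.range (N - k),
      (ballProj (lam • (x (k + i + 1) - z)) - lam • (μ - z)) =
      ∑ m ∈ Finset.Ioc k N, (ballProj (lam • (x m - z)) - lam • (μ - z)) := by
    rw [← Finset.Ico_add_one_add_one_eq_Ioc, Finset.sum_Ico_eq_sum_range,
      Nat.add_sub_add_right]
    exact Finset.sum_congr rfl fun i _ ↦ by rw [add_right_comm]
  have hsum : ∑ m ∈ Finset.Ioc k N, (ballProj (lam • (x m - z)) - lam • (μ - z)) =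
      (lam * ((N : ℝ) - k)) • (truncMean lam x z k N - μ) := by
    simp only [hterm, ← Finset.smul_sum, Finset.sum_sub_distrib, Finset.sum_const, Nat.card_Ioc]
    rw [truncMean, mul_smul, smul_sub ((N : ℝ) - k), smul_inv_smul₀ hn.ne',
      ← Nat.cast_smul_eq_nsmul ℝ, Nat.cast_sub hN.le]
  rw [hreindex, hsum, norm_smul, Real.norm_of_nonneg (by positivity)]

/- This `lam` makes the two terms on the left equal. -/
theorem add_mul_rpow_eq {L n c p lam : ℝ} (hL : 0 < L) (hn : 0 < n) (hc : 0 < c) (hp : p ≠ 0)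
    (hlam : lam = (L / (n * c)) ^ (1 / p)) :
    L + n * (c * lam ^ p) = lam * n * (2 * c ^ (1 / p) * (L / n) ^ ((p - 1) / p)) := by
  have hlam_rpow : n * (c * lam ^ p) = L := by
    rw [hlam, ← Real.rpow_mul (by positivity), one_div_mul_cancel hp, Real.rpow_one]
    field_simp
  have hlam_mul : lam * c ^ (1 / p) = (L / n) ^ (1 / p) := by
    rw [hlam, ← Real.mul_rpow (by positivity) hc.le]
    congr 1
    field_simp
  have hexp : (L / n) ^ (1 / p) * (L / n) ^ ((p - 1) / p) = L / n := by
    rw [← Real.rpow_add (by positivity), ← add_div, add_sub_cancel, div_self hp, Real.rpow_one]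
  calc L + n * (c * lam ^ p) = 2 * n * (L / n) := by rw [hlam_rpow]; field_simp; norm_num
    _ = 2 * n * (lam * c ^ (1 / p) * (L / n) ^ ((p - 1) / p)) := by rw [hlam_mul, hexp]
    _ = lam * n * (2 * c ^ (1 / p) * (L / n) ^ ((p - 1) / p)) := by ring

end TruncatedMean

theorem ofReal_one_sub_sub_le_measure {Ω : Type*} {mΩ : MeasurableSpace Ω} {P : Measure Ω}
    [IsProbabilityMeasure P] {s : Set Ω} {a b : ℝ} (ha : 0 ≤ a) (hb : 0 ≤ b)
    (hs : P sᶜ ≤ ENNReal.ofReal a + ENNReal.ofReal b) : ENNReal.ofReal (1 - a - b) ≤ P s := by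
  rw [ENNReal.ofReal_sub _ hb, ENNReal.ofReal_sub _ ha, ENNReal.ofReal_one, tsub_tsub,
    tsub_le_iff_right]
  calc (1 : ENNReal) = P (s ∪ sᶜ) := by rw [Set.union_compl_self, measure_univ]
    _ ≤ P s + P sᶜ := measure_union_le _ _
    _ ≤ P s + (ENNReal.ofReal a + ENNReal.ofReal b) := by gcongr

theorem stmt13_general {B : Type*} [NormedAddCommGroup B] [NormedSpace ℝ B] [CompleteSpace B]
    {Ω : Type*} {mΩ : MeasurableSpace Ω} {P : Measure Ω} [IsProbabilityMeasure P]
    {β : ℝ} (hβ : 0 < β) (hsmooth : IsTwoSmooth B β)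
    (ℱ : Filtration ℕ mΩ) (X : ℕ → Ω → B) (μ : B) {p v : ℝ}
    (hp1 : 1 ≤ p) (hp2 : p ≤ 2) (hv : 0 < v)
    (hadapted : ∀ n, StronglyMeasurable[ℱ (n + 1)] (X (n + 1)))
    (hmom : ∀ n, MemLp (X (n + 1)) (ENNReal.ofReal p) P)
    (hcondmean : ∀ n, P[X (n + 1) | ℱ n] =ᵐ[P] fun _ ↦ μ)
    (hcondmom : ∀ n, ∀ᵐ ω ∂P, P[fun ω ↦ ‖X (n + 1) ω - μ‖ ^ p | ℱ n] ω ≤ v)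
    {k : ℕ} {Z : Ω → B} (hZ : StronglyMeasurable[ℱ k] Z)
    {δ₂ : ℝ} (hδ₂ : 0 ≤ δ₂) {r₂ : ℝ} (hr₂ : 0 ≤ r₂)
    (htail : P {ω | r₂ ≤ ‖μ - Z ω‖} ≤ ENNReal.ofReal δ₂)
    {δ₁ : ℝ} (hδ₁ : δ₁ ∈ Set.Ioo 0 1) {N : ℕ} (hN : k < N) {lam : ℝ}
    (hlam : lam = (β * Real.log (2 / δ₁) /
      (((N : ℝ) - k) * devConst β p * (v + r₂ ^ p))) ^ (1 / p)) :
    ENNReal.ofReal (1 - δ₁ - δ₂) ≤ P {ω | ‖truncMean lam (X · ω) (Z ω) k N - μ‖ ≤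
      2 * (devConst β p * (v + r₂ ^ p)) ^ (1 / p) *
        (β * Real.log (2 / δ₁) / ((N : ℝ) - k)) ^ ((p - 1) / p)} := by
  have hn : 0 < (N : ℝ) - k := sub_pos.2 (by exact_mod_cast hN)
  have hL : 0 < β * Real.log (2 / δ₁) :=
    mul_pos hβ (Real.log_pos (by rw [lt_div_iff₀ hδ₁.1]; linarith [hδ₁.2]))
  have hc : 0 < devConst β p * (v + r₂ ^ p) := mul_pos (devConst_pos hβ hp1) (by positivity)
  rw [mul_assoc] at hlam
  have hlam_pos : 0 < lam := by rw [hlam]; positivity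
  let 𝒢 : Filtration ℕ mΩ :=
    ⟨fun i ↦ ℱ (k + i), fun _ _ hij ↦ ℱ.mono (by gcongr), fun i ↦ ℱ.le _⟩
  have hdev := hsmooth.measure_le_norm_sum_ballProj_sub_le (ℱ := 𝒢) (X := fun i ↦ X (k + i + 1))
    hβ hp1 hp2 (fun i ↦ hadapted _) (fun i ↦ hmom _) (fun i ↦ hcondmean _) (fun i ↦ hcondmom _) hZ
    hr₂ hlam_pos.le (N - k) hδ₁.1
  refine ofReal_one_sub_sub_le_measure hδ₁.1.le hδ₂
    ((measure_mono fun ω hω ↦ ?_).trans (hdev.trans (by gcongr)))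
  rw [Set.mem_ofPred_eq, norm_sum_ballProj_sub_eq hlam_pos.le (X · ω) (Z ω) μ hN,
    Nat.cast_sub hN.le, add_mul_rpow_eq hL hn hc (by linarith) hlam]
  gcongr
  exact le_of_not_ge hω

/-- **Line-crossing inequality optimized for a fixed sample size `N`.** With the choice
`λ = (β log(2/δ₁)/((N-k)(β𝔠_p + K_p2^{p-1})(v + r₂^p)))^{1/p}`, with probability at least
`1 - δ₁ - δ₂`,
`‖μ̂_N(k) - μ‖ ≤ 2((β𝔠_p + K_p2^{p-1})(v + r₂^p))^{1/p}(β log(2/δ₁)/(N-k))^{(p-1)/p}`. -/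
theorem stmt13
    {B : Type*} [NormedAddCommGroup B] [NormedSpace ℝ B] [CompleteSpace B]
    [TopologicalSpace.SeparableSpace B]
    {Ω : Type*} {mΩ : MeasurableSpace Ω} {P : Measure Ω} [IsProbabilityMeasure P]
    (β : ℝ) (hβ : 1 ≤ β)
    (hsmooth : ∀ x y : B, ‖x + y‖ ^ 2 + ‖x - y‖ ^ 2 ≤ 2 * ‖x‖ ^ 2 + 2 * β ^ 2 * ‖y‖ ^ 2)
    (ℱ : Filtration ℕ mΩ) (X : ℕ → Ω → B) (μ : B) (p v : ℝ)
    (hp1 : 1 < p) (hp2 : p ≤ 2) (hv : 0 < v)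
    (hadapted : ∀ n : ℕ, 1 ≤ n → StronglyMeasurable[ℱ n] (X n))
    (hint : ∀ n : ℕ, 1 ≤ n → Integrable (X n) P)
    (hmom : ∀ n : ℕ, 1 ≤ n → Integrable (fun ω => ‖X n ω‖ ^ p) P)
    (hcondmean : ∀ n : ℕ, P[X (n + 1) | ℱ n] =ᵐ[P] fun _ => μ)
    (hcondmom : ∀ n : ℕ, ∀ᵐ ω ∂P, (P[fun ω' => ‖X (n + 1) ω' - μ‖ ^ p | ℱ n]) ω ≤ v)
    (k : ℕ) (Z : Ω → B) (hZ : StronglyMeasurable[ℱ k] Z)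
    (δ₂ : ℝ) (hδ₂ : δ₂ ∈ Set.Ioo (0 : ℝ) 1) (r₂ : ℝ) (hr₂ : 0 ≤ r₂)
    (htail : P {ω | r₂ ≤ ‖μ - Z ω‖} ≤ ENNReal.ofReal δ₂)
    (δ₁ : ℝ) (hδ₁ : δ₁ ∈ Set.Ioo (0 : ℝ) 1) (hδ : δ₁ + δ₂ ≤ 1)
    (N : ℕ) (hN : k < N) (lam : ℝ)
    (hlam : lam = (β * Real.log (2 / δ₁) /
      (((N : ℝ) - k) * (β * frakC p (1 / β) + Kp p * 2 ^ (p - 1)) * (v + r₂ ^ p))) ^ (1 / p)) :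
    ENNReal.ofReal (1 - δ₁ - δ₂) ≤
      P {ω |
        ‖((N : ℝ) - k)⁻¹ • (∑ m ∈ Finset.Ioc k N,
            (truncB (lam • (X m ω - Z ω)) • (X m ω - Z ω) + Z ω)) - μ‖ ≤
          2 * ((β * frakC p (1 / β) + Kp p * 2 ^ (p - 1)) * (v + r₂ ^ p)) ^ (1 / p) *
            (β * Real.log (2 / δ₁) / ((N : ℝ) - k)) ^ ((p - 1) / p)} :=
  stmt13_general (one_pos.trans_le hβ) hsmooth ℱ X μ hp1.le hp2 hv (fun n ↦ hadapted _ n.succ_pos)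
    (fun n ↦ (memLp_ofReal_iff_integrable_norm_rpow (one_pos.trans hp1)
      (hint _ n.succ_pos).1).2 (hmom _ n.succ_pos))
    hcondmean hcondmom hZ hδ₂.1.le hr₂ htail hδ₁ hN hlam
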